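/- arXiv:2206.01121 — 2 statements merged into one kernel-verified Lean document; each statement's English description precedes it below -/
import Mathlib

section
/- Let ℓ ≥ 1 be a natural number and let ξ : ℕ → ℝ satisfy: ξ_i ≥ 0 for all i; ξ_i · sinh(ℓ/i) ≤ 1 for all i with 2 ≤ i ≤ ℓ; and ξ_i ≤ 1/i for all i > ℓ. Then the series ∑_{i=2}^{∞} ξ_i · sinh(ℓ/i) converges and 2ℓ · ∑_{i=2}^{∞} ξ_i · sinh(ℓ/i) ≤ 2·(1 + π²/6 + π⁴/450)·ℓ⁴. -/
/-!
Let `L ≥ 0` be a real number in place of `ℓ`. Each term with `i ≤ L` is at most `1`, and there are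
at most `L` of them. For `i > L` the argument `L / i` of `sinh` lies in `[0, 1]`, where
`sinh x ≤ 2 * x`, so the term is at most `2 * L / i ^ 2` and the Basel series bounds the tail. The
series is therefore `O(L)`, and the expectation is even quadratic in `L`.
-/

open Real

theorem sinh_le_two_mul {x : ℝ} (hx₀ : 0 ≤ x) (hx₁ : x ≤ 1) : sinh x ≤ 2 * x := by
  have exp_le : exp x - 1 - x ≤ x ^ 2 :=
    (le_abs_self _).trans (abs_exp_sub_one_sub_id_le (by rwa [abs_of_nonneg hx₀]))
  have le_exp_neg : -x + 1 ≤ exp (-x) := add_one_le_exp (-x)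
  have sq_le : x ^ 2 ≤ x := pow_le_of_le_one hx₀ hx₁ two_ne_zero
  rw [sinh_eq]
  linarith

theorem mul_sinh_div_le_of_le_one_div {a L t : ℝ} (hL : 0 ≤ L) (hLt : L ≤ t) (ha : a ≤ 1 / t) :
    a * sinh (L / t) ≤ 2 * L * (1 / t ^ 2) := by
  have ht : 0 ≤ t := hL.trans hLt
  have hdiv : 0 ≤ L / t := div_nonneg hL ht
  calc a * sinh (L / t)
      ≤ 1 / t * (2 * (L / t)) :=
        mul_le_mul ha (sinh_le_two_mul hdiv (div_le_one_of_le₀ hLt ht))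
          (sinh_nonneg_iff.mpr hdiv) (by positivity)
    _ = 2 * L * (1 / t ^ 2) := by ring

theorem summable_and_tsum_le_of_le_on_finset {ι : Type*} {f g : ι → ℝ} {A b : ℝ} (s : Finset ι)
    (hf : ∀ i, 0 ≤ f i) (hg : ∀ i ∈ s, 0 ≤ g i) (hgb : HasSum g b)
    (hfA : ∀ i ∈ s, f i ≤ A) (hfg : ∀ i ∉ s, f i ≤ g i) :
    Summable f ∧ ∑' i, f i ≤ s.card * A + b := by
  classical
  have hasSum_majorant : HasSum (fun i ↦ (if i ∈ s then A else 0) + g i) (s.card * A + b) := by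
    refine HasSum.add ?_ hgb
    have hasSum_ite : HasSum (fun i ↦ if i ∈ s then A else 0) (∑ i ∈ s, if i ∈ s then A else 0) :=
      hasSum_sum_of_ne_finset_zero fun i hi ↦ if_neg hi
    simpa using hasSum_ite
  have le_majorant (i : ι) : f i ≤ (if i ∈ s then A else 0) + g i := by
    split_ifs with hi
    · exact le_add_of_le_of_nonneg (hfA i hi) (hg i hi)
    · simpa using hfg i hi
  have summable_f : Summable f := .of_nonneg_of_le hf le_majorant hasSum_majorant.summable
  exact ⟨summable_f, hasSum_le le_majorant summable_f.hasSum hasSum_majorant⟩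

theorem hasSum_one_div_nat_add_two_sq :
    HasSum (fun k : ℕ ↦ 1 / ((k + 2 : ℕ) : ℝ) ^ 2) (π ^ 2 / 6 - 1) := by
  simpa [Finset.sum_range_succ] using (hasSum_nat_add_iff' 2).mpr hasSum_zeta_two

theorem summable_and_tsum_mul_sinh_le {L : ℝ} (hL : 0 ≤ L) {ξ : ℕ → ℝ}
    (hnonneg : ∀ i, 2 ≤ i → 0 ≤ ξ i)
    (hsmall : ∀ i : ℕ, 2 ≤ i → i ≤ L → ξ i * sinh (L / i) ≤ 1)
    (htail : ∀ i : ℕ, 2 ≤ i → L < i → ξ i ≤ 1 / i) :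
    Summable (fun k : ℕ ↦ ξ (k + 2) * sinh (L / (k + 2 : ℕ))) ∧
      ∑' k : ℕ, ξ (k + 2) * sinh (L / (k + 2 : ℕ)) ≤ (π ^ 2 / 3 - 1) * L := by
  have two_le (k : ℕ) : 2 ≤ k + 2 := Nat.le_add_left 2 k
  have mem_head_iff (k : ℕ) : k ∈ Finset.range (⌊L⌋₊ - 1) ↔ ((k + 2 : ℕ) : ℝ) ≤ L := by
    rw [Finset.mem_range, ← Nat.le_floor_iff hL]
    omega
  have card_head_le : ((Finset.range (⌊L⌋₊ - 1)).card : ℝ) ≤ L := by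
    rw [Finset.card_range]
    exact (Nat.cast_le.mpr (Nat.sub_le _ _)).trans (Nat.floor_le hL)
  obtain ⟨hsummable, htsum⟩ := summable_and_tsum_le_of_le_on_finset (Finset.range (⌊L⌋₊ - 1))
    (fun k ↦ mul_nonneg (hnonneg _ (two_le k)) (sinh_nonneg_iff.mpr (by positivity)))
    (fun k _ ↦ by positivity)
    (hasSum_one_div_nat_add_two_sq.mul_left (2 * L))
    (fun k hk ↦ hsmall _ (two_le k) ((mem_head_iff k).mp hk))
    (fun k hk ↦ by
      have hLk : L < (k + 2 : ℕ) := not_le.mp (mt (mem_head_iff k).mpr hk)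
      exact mul_sinh_div_le_of_le_one_div hL hLk.le (htail _ (two_le k) hLk))
  exact ⟨hsummable, htsum.trans (by linarith)⟩

theorem expected_degree_bound_general {L : ℝ} (hL : 0 ≤ L) {ξ : ℕ → ℝ}
    (hnonneg : ∀ i, 2 ≤ i → 0 ≤ ξ i)
    (hsmall : ∀ i : ℕ, 2 ≤ i → i ≤ L → ξ i * sinh (L / i) ≤ 1)
    (htail : ∀ i : ℕ, 2 ≤ i → L < i → ξ i ≤ 1 / i) :
    Summable (fun k : ℕ ↦ ξ (k + 2) * sinh (L / (k + 2 : ℕ))) ∧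
      2 * L * ∑' k : ℕ, ξ (k + 2) * sinh (L / (k + 2 : ℕ)) ≤ 2 * (π ^ 2 / 3 - 1) * L ^ 2 := by
  obtain ⟨hsummable, htsum⟩ := summable_and_tsum_mul_sinh_le hL hnonneg hsmall htail
  refine ⟨hsummable, ?_⟩
  calc 2 * L * ∑' k : ℕ, ξ (k + 2) * sinh (L / (k + 2 : ℕ))
      ≤ 2 * L * ((π ^ 2 / 3 - 1) * L) := by gcongr
    _ = 2 * (π ^ 2 / 3 - 1) * L ^ 2 := by ring

theorem pi_sq_div_three_sub_one_le : π ^ 2 / 3 - 1 ≤ 1 + π ^ 2 / 6 + π ^ 4 / 450 := by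
  have pi_sq_le : π ^ 2 ≤ 3.15 ^ 2 := by gcongr; exact pi_lt_d2.le
  have pi_pow_four_nonneg : 0 ≤ π ^ 4 / 450 := by positivity
  linarith

theorem quadratic_bound_le_quartic_bound {L : ℝ} (hL : 1 ≤ L) :
    2 * (π ^ 2 / 3 - 1) * L ^ 2 ≤ 2 * (1 + π ^ 2 / 6 + π ^ 4 / 450) * L ^ 4 := by
  have sq_le_pow_four : L ^ 2 ≤ L ^ 4 := pow_le_pow_right₀ hL (by norm_num)
  exact mul_le_mul (mul_le_mul_of_nonneg_left pi_sq_div_three_sub_one_le zero_le_two)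
    sq_le_pow_four (sq_nonneg L) (by positivity)

theorem expected_degree_bound (ℓ : ℕ) (hℓ : 1 ≤ ℓ) (ξ : ℕ → ℝ)
    (hnonneg : ∀ i, 0 ≤ ξ i)
    (hsmall : ∀ i, 2 ≤ i → i ≤ ℓ → ξ i * Real.sinh ((ℓ : ℝ) / (i : ℝ)) ≤ 1)
    (htail : ∀ i, ℓ < i → ξ i ≤ 1 / (i : ℝ)) :
    Summable (fun k : ℕ => ξ (k + 2) * Real.sinh ((ℓ : ℝ) / ((k + 2 : ℕ) : ℝ))) ∧
      2 * (ℓ : ℝ) * (∑' k : ℕ, ξ (k + 2) * Real.sinh ((ℓ : ℝ) / ((k + 2 : ℕ) : ℝ)))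
        ≤ 2 * (1 + Real.pi ^ 2 / 6 + Real.pi ^ 4 / 450) * (ℓ : ℝ) ^ 4 :=
  have one_le_ℓ : (1 : ℝ) ≤ ℓ := Nat.one_le_cast.mpr hℓ
  (expected_degree_bound_general ℓ.cast_nonneg (fun i _ ↦ hnonneg i)
    (fun i hi hiℓ ↦ hsmall i hi (Nat.cast_le.mp hiℓ))
    (fun i _ hℓi ↦ htail i (Nat.cast_lt.mp hℓi))).imp_right
      fun hquadratic ↦ hquadratic.trans (quadratic_bound_le_quartic_bound one_le_ℓ)
end

section
/- Let n ≥ 2 and 2 ≤ k ≤ n be natural numbers, and fix an element x of an n-element set (e.g. x : Fin n). Then the number of permutations σ of the set for which the cycle of σ containing x has length exactly k (i.e. the support of the cycle of σ at x has cardinality k) equals (n−1)!. Consequently, under the uniform distribution on permutations, the probability that x lies in a cycle of length k is 1/n. -/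
/-!
Measure cycles by minimal periods, which also count fixed points as cycles of length one.
A permutation of `Option α` arises from a unique permutation `τ` of `α` by either fixing `none` or
inserting `none` just before some `a : α` in the cycle of `τ` through `a`; the insertion lengthens
that cycle by one. Hence the permutations in which `none` has period `1` are counted by
`(card α)!`, and those in which it has period `k + 1` by summing over `a` the number of `τ` in which
`a` has period `k`. By induction on `k` the latter is `card α * (card α - 1)!`, again `(card α)!`.
-/

section MinimalPeriod

open Function Equiv Equiv.Perm

variable {α β : Type*}

theorem minimalPeriod_apply_of_semiconj {f : α → α} {g : β → β} {e : α → β}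
    (he : Injective e) (h : Semiconj e f g) (x : α) :
    minimalPeriod g (e x) = minimalPeriod f x := by
  refine minimalPeriod_eq_minimalPeriod_iff.2 fun j => ?_
  rw [IsPeriodicPt, IsFixedPt, ← (h.iterate_right j).eq, he.eq_iff, IsPeriodicPt, IsFixedPt]

theorem minimalPeriod_eq_card_of_isCycleOn {σ : Perm α} {s : Finset α} {x : α}
    (hσ : σ.IsCycleOn s) (hx : x ∈ s) : minimalPeriod σ x = s.card := by
  have isPeriodicPt_iff (j : ℕ) : IsPeriodicPt σ j x ↔ s.card ∣ j := by
    rw [IsPeriodicPt, IsFixedPt, iterate_eq_pow, hσ.pow_apply_eq hx]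
  exact Nat.dvd_antisymm ((isPeriodicPt_iff _).2 dvd_rfl).minimalPeriod_dvd
    ((isPeriodicPt_iff _).1 (isPeriodicPt_minimalPeriod σ x))

theorem card_support_cycleOf_eq_iff_minimalPeriod_eq [Fintype α] [DecidableEq α] {k : ℕ}
    (hk : 2 ≤ k) (σ : Perm α) (x : α) :
    (σ.cycleOf x).support.card = k ↔ minimalPeriod σ x = k := by
  by_cases hx : σ x = x
  · rw [(cycleOf_eq_one_iff σ).2 hx, Perm.support_one, Finset.card_empty,
      minimalPeriod_eq_one_iff_isFixedPt.2 hx]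
    omega
  · have hmem : x ∈ (σ.cycleOf x).support :=
      mem_support_cycleOf_iff.2 ⟨SameCycle.rfl, mem_support.2 hx⟩
    rw [minimalPeriod_eq_card_of_isCycleOn (isCycleOn_support_cycleOf σ x) hmem]

theorem minimalPeriod_optionCongr_none (τ : Perm α) : minimalPeriod (optionCongr τ) none = 1 :=
  minimalPeriod_eq_one_iff_isFixedPt.2 rfl

variable [DecidableEq α]

theorem iterate_succ_swap_mul_optionCongr_none (τ : Perm α) {a : α} {j : ℕ}
    (hj : j < minimalPeriod τ a) :
    (swap none (some a) * optionCongr τ)^[j + 1] none = some (τ^[j] a) := by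
  induction j with
  | zero => simp
  | succ j ih =>
    have hne : τ^[j + 1] a ≠ a :=
      not_isPeriodicPt_of_pos_of_lt_minimalPeriod j.succ_ne_zero hj
    rw [iterate_succ_apply' _ (j + 1), ih (j.lt_succ_self.trans hj), Perm.mul_apply,
      optionCongr_apply, Option.map_some, ← iterate_succ_apply' τ,
      swap_apply_of_ne_of_ne (Option.some_ne_none _) (Option.some_injective α |>.ne hne)]

theorem isPeriodicPt_swap_mul_optionCongr_none {τ : Perm α} {a : α} (ha : a ∈ periodicPts τ) :
    IsPeriodicPt (swap none (some a) * optionCongr τ) (minimalPeriod τ a + 1) none := by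
  obtain ⟨j, hj⟩ := Nat.exists_eq_add_one.2 (minimalPeriod_pos_of_mem_periodicPts ha)
  have hreturn : τ^[j + 1] a = a := hj ▸ isPeriodicPt_minimalPeriod τ a
  rw [IsPeriodicPt, IsFixedPt, iterate_succ_apply', hj,
    iterate_succ_swap_mul_optionCongr_none τ (by omega), Perm.mul_apply, optionCongr_apply,
    Option.map_some, ← iterate_succ_apply' τ, hreturn, swap_apply_right]

theorem minimalPeriod_swap_mul_optionCongr_none {τ : Perm α} {a : α} (ha : a ∈ periodicPts τ) :
    minimalPeriod (swap none (some a) * optionCongr τ) none = minimalPeriod τ a + 1 := by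
  have hperiodic := isPeriodicPt_swap_mul_optionCongr_none ha
  refine le_antisymm (hperiodic.minimalPeriod_le (Nat.succ_pos _)) (not_lt.1 fun hlt => ?_)
  obtain ⟨j, hj⟩ := Nat.exists_eq_add_one.2 (hperiodic.minimalPeriod_pos (Nat.succ_pos _))
  have hnone := isPeriodicPt_minimalPeriod (swap none (some a) * optionCongr τ) none
  rw [hj, IsPeriodicPt, IsFixedPt, iterate_succ_swap_mul_optionCongr_none τ (by omega)] at hnone
  exact Option.some_ne_none _ hnone

end MinimalPeriod

section Counting

open Finset Equiv Equiv.Perm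
open Function hiding swap
open scoped Nat

variable {α β : Type*} [Fintype α] [DecidableEq α]

theorem card_filter_perm_option (p : Perm (Option α) → Prop) [DecidablePred p] :
    #{σ | p σ} = #{τ : Perm α | p (optionCongr τ)} +
      ∑ a, #{τ : Perm α | p (swap none (some a) * optionCongr τ)} := by
  simp only [card_filter]
  rw [← decomposeOption.symm.sum_comp, Fintype.sum_prod_type, Fintype.sum_option]
  simp only [decomposeOption_symm_apply, swap_self, ← Perm.one_def, one_mul]

theorem card_filter_minimalPeriod_none_eq_one :
    #{σ : Perm (Option α) | minimalPeriod σ none = 1} = (Fintype.card α)! := by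
  have hinsert (a : α) (τ : Perm α) :
      minimalPeriod (swap none (some a) * optionCongr τ) none ≠ 1 := by
    have ha := τ.injective.mem_periodicPts a
    rw [minimalPeriod_swap_mul_optionCongr_none ha]
    exact (Nat.succ_lt_succ (minimalPeriod_pos_of_mem_periodicPts ha)).ne'
  simp only [card_filter_perm_option, minimalPeriod_optionCongr_none, hinsert, filter_true,
    filter_false, card_empty, sum_const_zero, add_zero, card_univ, Fintype.card_perm]

theorem card_filter_minimalPeriod_none_eq_add_one {k : ℕ} (hk : k ≠ 0) :
    #{σ : Perm (Option α) | minimalPeriod σ none = k + 1} =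
      ∑ a, #{τ : Perm α | minimalPeriod τ a = k} := by
  have hinsert (a : α) (τ : Perm α) :
      minimalPeriod (swap none (some a) * optionCongr τ) none = minimalPeriod τ a + 1 :=
    minimalPeriod_swap_mul_optionCongr_none (τ.injective.mem_periodicPts a)
  simp only [card_filter_perm_option, minimalPeriod_optionCongr_none, hinsert, add_left_inj,
    right_eq_add, hk, filter_false, card_empty, zero_add]

theorem card_filter_minimalPeriod_apply_equiv [Fintype β] [DecidableEq β] (e : α ≃ β) (x : α)
    (k : ℕ) :
    #{σ : Perm β | minimalPeriod σ (e x) = k} = #{σ : Perm α | minimalPeriod σ x = k} := by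
  refine (card_equiv e.permCongr fun σ => ?_).symm
  have hsemiconj : Semiconj e σ (e.permCongr σ) := fun y => by simp
  simp [minimalPeriod_apply_of_semiconj e.injective hsemiconj]

theorem card_filter_minimalPeriod_eq {k : ℕ} (hk : 1 ≤ k) (hkα : k ≤ Fintype.card α) (x : α) :
    #{σ : Perm α | minimalPeriod σ x = k} = (Fintype.card α - 1)! := by
  induction k, hk using Nat.le_induction generalizing α with
  | base =>
    rw [← optionSubtypeNe_none x, card_filter_minimalPeriod_apply_equiv,
      card_filter_minimalPeriod_none_eq_one]
    exact congrArg _ (Set.card_ne_eq x)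
  | succ k hk ih =>
    have hcard : Fintype.card {y // y ≠ x} = Fintype.card α - 1 := Set.card_ne_eq x
    have hcount (a : {y // y ≠ x}) :
        #{τ : Perm {y // y ≠ x} | minimalPeriod τ a = k} = (Fintype.card α - 1 - 1)! := by
      rw [ih (by omega) a, hcard]
    calc #{σ : Perm α | minimalPeriod σ x = k + 1}
        = ∑ a, #{τ : Perm {y // y ≠ x} | minimalPeriod τ a = k} := by
          rw [← card_filter_minimalPeriod_none_eq_add_one (by omega),
            ← card_filter_minimalPeriod_apply_equiv (optionSubtypeNe x), optionSubtypeNe_none]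
      _ = (Fintype.card α - 1) * (Fintype.card α - 1 - 1)! := by
          simp only [hcount, sum_const, card_univ, hcard, smul_eq_mul]
      _ = (Fintype.card α - 1)! := Nat.mul_factorial_pred (by omega)

theorem cycle_length_count_general {k : ℕ} (hk : 2 ≤ k) (hkα : k ≤ Fintype.card α) (x : α) :
    #{σ : Perm α | (σ.cycleOf x).support.card = k} = (Fintype.card α - 1)! ∧
      (#{σ : Perm α | (σ.cycleOf x).support.card = k} : ℝ) / Fintype.card (Perm α) =
        1 / Fintype.card α := by
  have hcount : #{σ : Perm α | (σ.cycleOf x).support.card = k} = (Fintype.card α - 1)! := by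
    simp only [card_support_cycleOf_eq_iff_minimalPeriod_eq hk]
    exact card_filter_minimalPeriod_eq (by omega) hkα x
  refine ⟨hcount, ?_⟩
  rw [hcount, Fintype.card_perm, ← Nat.mul_factorial_pred (by omega : Fintype.card α ≠ 0),
    Nat.cast_mul, div_mul_cancel_right₀ (Nat.cast_ne_zero.2 (Nat.factorial_ne_zero _)), one_div]

end Counting

theorem cycle_length_count (n k : ℕ) (hn : 2 ≤ n) (hk2 : 2 ≤ k) (hkn : k ≤ n) (x : Fin n) :
    (Finset.univ.filter
        (fun σ : Equiv.Perm (Fin n) => (σ.cycleOf x).support.card = k)).card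
        = Nat.factorial (n - 1) ∧
      ((Finset.univ.filter
          (fun σ : Equiv.Perm (Fin n) => (σ.cycleOf x).support.card = k)).card : ℝ)
          / (Fintype.card (Equiv.Perm (Fin n)) : ℝ) = 1 / (n : ℝ) := by
  simpa only [Fintype.card_fin] using
    cycle_length_count_general hk2 ((Fintype.card_fin n).symm ▸ hkn) x
end
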